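/- arXiv:2202.06949 — 4 statements merged into one kernel-verified Lean document; each statement's English description precedes it below -/
import Mathlib

section
/- Fix an integer k ≥ 1 and let Q_k be the set of all rationals in [0,1] whose reduced denominator is at most k. If q1, q2 ∈ Q_k satisfy q1 < q2 and no element of Q_k lies strictly between q1 and q2, then q1 and q2 are adjacent: writing q1 = l1/k1 and q2 = l2/k2 in lowest terms, l2·k1 − l1·k2 = 1. -/
/-!
Write `q1 = a/b`, `q2 = c/d` and `D = cb - ad ≥ 1`. As `a` and `b` are coprime, there are
integers with `bx - ay = 1` and `k - b < y ≤ k`; then `x/y > q1` has denominator at most `k`,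
so `x/y ≥ q2`, that is `e = xd - cy ≥ 0`. The identities `d = b e + y D` and `c = x D + a e`
finish the proof: `e ≥ 1` would give `d ≥ b + y > k`, so `e = 0` and `D` divides
both `c` and `d`, which are coprime.
-/

/-- Among the solutions of `b * x - a * y = 1`, one has `y` in any given window of length `b`. -/
lemma exists_bezout_in_window {a b : ℤ} (k : ℤ) (hb : 0 < b) (h : IsCoprime a b) :
    ∃ x y : ℤ, b * x - a * y = 1 ∧ k - b < y ∧ y ≤ k := by
  obtain ⟨u, v, huv⟩ := h
  -- `y` is the representative of `-u` modulo `b` in the window `(k - b, k]`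
  refine ⟨v + a * ((k + u) / b), k - (k + u) % b, ?_, ?_, ?_⟩
  · linear_combination huv + a * Int.emod_add_mul_ediv (k + u) b
  · linarith [Int.emod_lt_of_pos (k + u) hb]
  · linarith [Int.emod_nonneg (k + u) hb.ne']

/-- Fix `k ≥ 1` and let `Q_k` be the set of rationals in `[0,1]` with
reduced denominator at most `k`. If `q1 < q2` are in `Q_k` and no element of `Q_k` lies
strictly between them, then `q1` and `q2` are adjacent: `l2·k1 − l1·k2 = 1` where
`q1 = l1/k1` and `q2 = l2/k2` in lowest terms. -/
theorem consecutive_in_Qk_adjacent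
    (k : ℕ) (hk : 1 ≤ k) (q1 q2 : ℚ)
    (h1 : 0 ≤ q1 ∧ q1 ≤ 1 ∧ q1.den ≤ k)
    (h2 : 0 ≤ q2 ∧ q2 ≤ 1 ∧ q2.den ≤ k)
    (hlt : q1 < q2)
    (hgap : ∀ q : ℚ, 0 ≤ q → q ≤ 1 → q.den ≤ k → ¬(q1 < q ∧ q < q2)) :
    q2.num * (q1.den : ℤ) - q1.num * (q2.den : ℤ) = 1 := by
  have hb : (0 : ℤ) < q1.den := by exact_mod_cast q1.den_pos
  have hd : (0 : ℤ) < q2.den := by exact_mod_cast q2.den_pos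
  have hbk : (q1.den : ℤ) ≤ k := by exact_mod_cast h1.2.2
  have hdk : (q2.den : ℤ) ≤ k := by exact_mod_cast h2.2.2
  have hD : q1.num * (q2.den : ℤ) < q2.num * q1.den := Rat.lt_iff _ _ |>.1 hlt
  obtain ⟨x, y, hxy, hy1, hy2⟩ :=
    exists_bezout_in_window (k : ℤ) hb (Rat.isCoprime_num_den q1)
  have hy : 0 < y := by linarith
  have hcop : IsCoprime q2.num (q2.den : ℤ) := Rat.isCoprime_num_den q2
  have he : 0 ≤ x * q2.den - q2.num * y := by
    by_contra! hneg
    have hyQ : (0 : ℚ) < y := by exact_mod_cast hy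
    have hbQ : (0 : ℚ) < q1.den := by exact_mod_cast hb
    have hdQ : (0 : ℚ) < q2.den := by exact_mod_cast hd
    have hl : q1 < (x : ℚ) / y := by
      rw [← Rat.num_div_den q1, div_lt_div_iff₀ hbQ hyQ]
      have : q1.num * y < x * q1.den := by linarith
      exact_mod_cast this
    have hr : (x : ℚ) / y < q2 := by
      rw [← Rat.num_div_den q2, div_lt_div_iff₀ hyQ hdQ]
      have : x * q2.den < q2.num * y := by linarith
      exact_mod_cast this
    refine hgap ((x : ℚ) / y) (h1.1.trans hl.le) (hr.le.trans h2.2.1) ?_ ⟨hl, hr⟩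
    have hdvd : (((x : ℚ) / y).den : ℤ) ∣ y := by
      rw [← Rat.divInt_eq_div]
      exact Rat.den_dvd x y
    have := Int.le_of_dvd hy hdvd
    omega
  have hid : (q2.den : ℤ) = q1.den * (x * q2.den - q2.num * y)
      + y * (q2.num * q1.den - q1.num * q2.den) := by
    linear_combination (-(q2.den : ℤ)) * hxy
  have hic : q2.num = x * (q2.num * q1.den - q1.num * q2.den)
      + q1.num * (x * q2.den - q2.num * y) := by
    linear_combination (-q2.num) * hxy
  have he0 : x * q2.den - q2.num * y = 0 := by
    by_contra hne
    have he1 : 1 ≤ x * q2.den - q2.num * y := by omega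
    have hD1 : 1 ≤ q2.num * (q1.den : ℤ) - q1.num * q2.den := by linarith
    nlinarith [mul_le_mul_of_nonneg_left he1 hb.le, mul_le_mul_of_nonneg_left hD1 hy.le]
  rw [he0, mul_zero] at hid hic
  have hunit : IsUnit (q2.num * (q1.den : ℤ) - q1.num * q2.den) :=
    hcop.isUnit_of_dvd' ⟨x, by linarith⟩ ⟨y, by linarith⟩
  rcases Int.isUnit_iff.1 hunit with h | h <;> linarith
end

section
/- Let l1 ≥ 0, l2 ≥ 1, k1 ≥ 1, k2 ≥ 1 be integers with l2·k1 − l1·k2 = 1. Let t be a natural number and let a_1, ..., a_t be nonnegative integers satisfying (i) the sum over i of max(a_i − 1, 0) is at most (l2 − 1)·k1, and (ii) the sum over i of a_i is at least (l1 + 1)·k2. Then t ≥ k1 + k2 − 1. -/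
/-- The core counting inequality of the lower-bound argument: if
`l2·k1 − l1·k2 = 1` (with `l1 ≥ 0`, `l2 ≥ 1`, `k1, k2 ≥ 1`) and the nonnegative integers
`a_1, ..., a_t` satisfy `∑ max(a_i − 1, 0) ≤ (l2 − 1)·k1` and `∑ a_i ≥ (l1 + 1)·k2`,
then `t ≥ k1 + k2 − 1`. -/
theorem counting_lower_bound
    (l1 l2 k1 k2 : ℤ)
    (hl1 : 0 ≤ l1) (hl2 : 1 ≤ l2) (hk1 : 1 ≤ k1) (hk2 : 1 ≤ k2)
    (hadj : l2 * k1 - l1 * k2 = 1)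
    (t : ℕ) (a : Fin t → ℕ)
    (h1 : (∑ i, max ((a i : ℤ) - 1) 0) ≤ (l2 - 1) * k1)
    (h2 : (l1 + 1) * k2 ≤ ∑ i, (a i : ℤ)) :
    k1 + k2 - 1 ≤ (t : ℤ) := by
  -- Since `a i - 1 ≤ max (a i - 1) 0`, summing gives `∑ a i - t ≤ (l2 - 1) * k1`, so
  -- `t ≥ (l1 + 1) * k2 - (l2 - 1) * k1 = k1 + k2 - (l2 * k1 - l1 * k2)`.
  have h : ∑ i, ((a i : ℤ) - 1) ≤ ∑ i, max ((a i : ℤ) - 1) 0 :=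
    Finset.sum_le_sum fun i _ => le_max_left _ _
  have h' : ∑ i, ((a i : ℤ) - 1) = ∑ i, (a i : ℤ) - t := by
    simp [Finset.sum_sub_distrib]
  linarith
end

section
/- Let l, k be coprime integers with 1 ≤ l < k. For every positive integer n there exist n step-function probability measures μ_1, ..., μ_n on [0,1] with the following property: for every natural number m and every set A ⊆ [0,1] that is achievable with m cuts, if μ_i(A) = l/k for every i ∈ {1, ..., n}, then m ≥ 2·(k−1)·n/k − k (as real numbers). -/
/-!
Choose `N` and `q` with `N * l = k * q + 1` (possible since `l` and `k` are coprime), and view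
`[0,1)` as `N` consecutive copies of a pattern made of `2 n` cells. Each measure is uniform on all
the copies of some pattern cells (`cellMeasure`, `support`). The indices `0, …, n - 1` are divided
into blocks of length `k`. A measure with index `j`, `k ∤ j`, lives on the cell `2 j`; the first
measure of each block lives on the cells `2 j + 1`, `j` running over the other indices of its
block, of which there are at most `k - 1`.

Fold the `N` copies onto one pattern and let `f` count how many copies of a point lie in the set
`A`. If a measure takes the value `l / k` on `A`, then `f` has mean `N l / k = q + 1 / k` on its
pattern cells. As `f` is integer valued, the cell `2 j` contains a point with `f ≥ q + 1`, and in
the `p < k` cells of the first measure of a block, points at a common relative position can be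
chosen for which the sum of `f` is at most `p q` (`exists_visits`). Within the pattern these high
and low points alternate. Unfolding, the `N` copies of the pattern give one long alternating chain
of points in `[0,1)`, and membership in `A` changes at most `m` times along it; summing
`1_A(high) - 1_A(low)` over neighbours in the chain yields `2 J ≤ m + 1`, where `J` is the number
of indices not divisible by `k` (`two_mul_sum_le`, `two_mul_card_le`). The term `1` accounts for
the two ends of the chain, and the slack `k` of the theorem absorbs it and the rounding in
`J = n - ⌈n / k⌉`.
-/

open MeasureTheory
open scoped ENNReal

/-- A step-function probability measure on `[0,1]`: a Borel probability measure on `ℝ`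
that is absolutely continuous w.r.t. Lebesgue measure with a piecewise constant density
supported in `[0,1]`. -/
def IsStepMeasure (μ : Measure ℝ) : Prop :=
  IsProbabilityMeasure μ ∧
  ∃ (n : ℕ) (a b : Fin n → ℝ) (c : Fin n → ℝ≥0∞),
    (∀ i, 0 ≤ a i ∧ b i ≤ 1) ∧
    μ = volume.withDensity
      (fun x => ∑ i, Set.indicator (Set.Ico (a i) (b i)) (fun _ => c i) x)

/-- `A ⊆ [0,1]` is achievable with `m` cuts: there are points
`0 = y_0 ≤ y_1 ≤ ... ≤ y_m ≤ y_{m+1} = 1` such that `A` is the union of some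
subcollection of the `m+1` closed intervals determined by these points. -/
def AchievableWithCuts (m : ℕ) (A : Set ℝ) : Prop :=
  ∃ y : Fin (m + 2) → ℝ, Monotone y ∧ y 0 = 0 ∧ y (Fin.last (m + 1)) = 1 ∧
    ∃ S : Finset (Fin (m + 1)), A = ⋃ i ∈ S, Set.Icc (y i.castSucc) (y i.succ)


/-! ### Measures that are uniform on a periodic set of cells -/

/-- The `i`-th of the `T * N` equal cells into which `[0,1)` is divided. -/
def cell (T N i : ℕ) : Set ℝ :=
  Set.Ico ((i : ℝ) / (T * N)) (((i : ℝ) + 1) / (T * N))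

/-- View `[0,1)` as `N` consecutive copies of a pattern of `T` cells. For a set `C` of cells of
the pattern, this is the uniform measure on all the copies of the cells in `C`. -/
noncomputable def cellMeasure (T N : ℕ) (C : Finset ℕ) : Measure ℝ :=
  volume.withDensity (fun x => ∑ i : Fin (T * N),
    Set.indicator (Set.Ico (((i : ℕ) : ℝ) / (T * N)) ((((i : ℕ) : ℝ) + 1) / (T * N)))
      (fun _ => if (i : ℕ) % T ∈ C then (T : ℝ≥0∞) / C.card else 0) x)

/-- The number of pairs (copy `t`, pattern cell `c ∈ C`) for which the point at relative
position `u` in the `t`-th copy of `c` lies in `B`. -/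
noncomputable def visits (T N : ℕ) (C : Finset ℕ) (B : Set ℝ) (u : ℝ) : ℕ :=
  ∑ t ∈ Finset.range N, ∑ c ∈ C,
    B.indicator (fun _ => (1 : ℕ)) ((((T * t + c : ℕ) : ℝ) + u) / (T * N))

lemma sum_range_mul_eq {M : Type*} [AddCommMonoid M] (T N : ℕ) (φ : ℕ → M) :
    ∑ i ∈ Finset.range (T * N), φ i
      = ∑ t ∈ Finset.range N, ∑ c ∈ Finset.range T, φ (T * t + c) := by
  induction N with
  | zero => simp
  | succ N ih => rw [Nat.mul_succ, Finset.sum_range_add, ih, Finset.sum_range_succ]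

lemma cellMeasure_apply (T N : ℕ) (C : Finset ℕ) (hC : C ⊆ Finset.range T)
    {B : Set ℝ} (hB : MeasurableSet B) :
    cellMeasure T N C B = (T : ℝ≥0∞) / C.card *
      ∑ t ∈ Finset.range N, ∑ c ∈ C, volume (cell T N (T * t + c) ∩ B) := by
  have h1 : cellMeasure T N C B = ∑ i ∈ Finset.range (T * N),
      (if i % T ∈ C then (T : ℝ≥0∞) / C.card else 0) * volume (cell T N i ∩ B) := by
    rw [cellMeasure, withDensity_apply _ hB, lintegral_finsetSum]
    · rw [← Fin.sum_univ_eq_sum_range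
        (fun i => (if i % T ∈ C then (T : ℝ≥0∞) / C.card else 0) * volume (cell T N i ∩ B))]
      refine Finset.sum_congr rfl fun i _ => ?_
      rw [lintegral_indicator_const measurableSet_Ico, Measure.restrict_apply measurableSet_Ico]
      rfl
    · intro i _
      exact measurable_const.indicator measurableSet_Ico
  rw [h1, sum_range_mul_eq, Finset.mul_sum]
  refine Finset.sum_congr rfl fun t _ => ?_
  rw [Finset.mul_sum, ← Finset.sum_subset hC]
  · refine Finset.sum_congr rfl fun c hc => ?_
    have : (T * t + c) % T = c := by
      rw [Nat.mul_add_mod, Nat.mod_eq_of_lt (Finset.mem_range.1 (hC hc))]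
    rw [this, if_pos hc]
  · intro c hc hc'
    have : (T * t + c) % T = c := by
      rw [Nat.mul_add_mod, Nat.mod_eq_of_lt (Finset.mem_range.1 hc)]
    rw [this, if_neg hc', zero_mul]

lemma volume_cell (T N i : ℕ) : volume (cell T N i) = ENNReal.ofReal (1 / (T * N)) := by
  rw [cell, Real.volume_Ico]
  congr 1
  ring

lemma isStepMeasure_cellMeasure (T N : ℕ) (hT : 0 < T) (hN : 0 < N) (C : Finset ℕ)
    (hC : C ⊆ Finset.range T) (hne : C.Nonempty) : IsStepMeasure (cellMeasure T N C) := by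
  have hTN : (0 : ℝ) < T * N := by positivity
  have hc : 0 < C.card := hne.card_pos
  refine ⟨⟨?_⟩, T * N, _, _, _, ?_, rfl⟩
  · rw [cellMeasure_apply T N C hC MeasurableSet.univ]
    simp only [Set.inter_univ, volume_cell, Finset.sum_const, Finset.card_range, nsmul_eq_mul]
    have e1 : (T : ℝ≥0∞) / C.card = ENNReal.ofReal ((T : ℝ) / C.card) := by
      rw [ENNReal.ofReal_div_of_pos (by positivity), ENNReal.ofReal_natCast,
        ENNReal.ofReal_natCast]
    rw [e1, ← ENNReal.ofReal_natCast N, ← ENNReal.ofReal_natCast C.card,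
      ← ENNReal.ofReal_mul (by positivity), ← ENNReal.ofReal_mul (by positivity),
      ← ENNReal.ofReal_mul (by positivity), ← ENNReal.ofReal_one]
    congr 1
    field_simp
  · intro i
    refine ⟨by positivity, ?_⟩
    rw [div_le_one hTN]
    exact_mod_cast i.2

/-- Rescaling a cell to `[0,1)`. -/
lemma lintegral_cell (T N i : ℕ) (hT : 0 < T) (hN : 0 < N) {B : Set ℝ} (hB : MeasurableSet B) :
    ∫⁻ u in Set.Ico (0 : ℝ) 1,
        ((B.indicator (fun _ => (1 : ℕ)) (((i : ℝ) + u) / (T * N)) : ℕ) : ℝ≥0∞)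
      = ENNReal.ofReal (T * N) * volume (cell T N i ∩ B) := by
  have hTN : (0 : ℝ) < T * N := by positivity
  set g : ℝ → ℝ := fun u => ((i : ℝ) + u) / (T * N) with hg
  have hgm : Measurable g := by fun_prop
  have h1 : ∀ u, ((B.indicator (fun _ => (1 : ℕ)) (g u) : ℕ) : ℝ≥0∞)
      = (g ⁻¹' B).indicator (fun _ => (1 : ℝ≥0∞)) u := by
    intro u
    by_cases h : g u ∈ B <;> simp [Set.indicator, h]
  have h2 : g ⁻¹' B ∩ Set.Ico 0 1 = (fun u => (i : ℝ) + u) ⁻¹'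
      ((fun x => (1 / (T * N : ℝ)) * x) ⁻¹' (cell T N i ∩ B)) := by
    ext u
    simp only [Set.mem_inter_iff, Set.mem_preimage, hg, cell, Set.mem_Ico, one_div_mul_eq_div]
    rw [div_le_div_iff_of_pos_right hTN, div_lt_div_iff_of_pos_right hTN]
    constructor
    · rintro ⟨a, b, c⟩; exact ⟨⟨by linarith, by linarith⟩, a⟩
    · rintro ⟨⟨a, b⟩, c⟩; exact ⟨c, by linarith, by linarith⟩
  calc _ = ∫⁻ u in Set.Ico (0 : ℝ) 1, (g ⁻¹' B).indicator (fun _ => (1 : ℝ≥0∞)) u :=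
        lintegral_congr h1
    _ = _ := by
      rw [lintegral_indicator_const (hgm hB), one_mul, Measure.restrict_apply (hgm hB), h2,
        measure_preimage_add, Real.volume_preimage_mul_left (by positivity)]
      congr 2
      rw [one_div, inv_inv, abs_of_pos hTN]

/-- The mean of `visits` over the relative position is governed by the measure of `B`. -/
lemma lintegral_visits (T N : ℕ) (hT : 0 < T) (hN : 0 < N) (C : Finset ℕ)
    (hC : C ⊆ Finset.range T) (hne : C.Nonempty) {B : Set ℝ} (hB : MeasurableSet B) :
    ∫⁻ u in Set.Ico (0 : ℝ) 1, (visits T N C B u : ℝ≥0∞)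
      = ((C.card * N : ℕ) : ℝ≥0∞) * cellMeasure T N C B := by
  have hmeas : ∀ i : ℕ, Measurable fun u : ℝ =>
      ((B.indicator (fun _ => (1 : ℕ)) (((i : ℝ) + u) / (T * N)) : ℕ) : ℝ≥0∞) := by
    intro i
    have h0 : Measurable (B.indicator (fun _ => (1 : ℕ))) := measurable_const.indicator hB
    have h1 : Measurable fun u : ℝ => ((i : ℝ) + u) / (T * N) := by fun_prop
    exact (measurable_from_top (f := fun n : ℕ => (n : ℝ≥0∞))).comp (h0.comp h1)
  simp only [visits, Nat.cast_sum]
  rw [lintegral_finsetSum _ fun t _ => Finset.measurable_sum _ fun c _ => hmeas _]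
  rw [cellMeasure_apply T N C hC hB, ← mul_assoc]
  have hc : (C.card : ℝ≥0∞) ≠ 0 := by simpa using hne.ne_empty
  have hk : ((C.card * N : ℕ) : ℝ≥0∞) * ((T : ℝ≥0∞) / C.card) = ENNReal.ofReal (T * N) := by
    rw [ENNReal.ofReal_mul (by positivity), ENNReal.ofReal_natCast, ENNReal.ofReal_natCast,
      Nat.cast_mul, mul_comm (C.card : ℝ≥0∞), mul_assoc,
      ENNReal.mul_div_cancel hc (ENNReal.natCast_ne_top _), mul_comm]
  rw [hk, Finset.mul_sum]
  refine Finset.sum_congr rfl fun t _ => ?_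
  rw [lintegral_finsetSum _ fun c _ => hmeas _, Finset.mul_sum]
  exact Finset.sum_congr rfl fun c _ => lintegral_cell T N _ hT hN hB

/-- Some relative positions have at most, and some at least, the mean number of visits. -/
lemma exists_visits (T N : ℕ) (hT : 0 < T) (hN : 0 < N) (C : Finset ℕ)
    (hC : C ⊆ Finset.range T) (hne : C.Nonempty) {B : Set ℝ} (hB : MeasurableSet B)
    {x : ℝ} (hx : 0 ≤ x) (h : cellMeasure T N C B = ENNReal.ofReal x) :
    (∃ u ∈ Set.Ico (0 : ℝ) 1, (visits T N C B u : ℝ) ≤ C.card * N * x) ∧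
    (∃ u ∈ Set.Ico (0 : ℝ) 1, C.card * N * x ≤ (visits T N C B u : ℝ)) := by
  have hint : ∫⁻ u in Set.Ico (0 : ℝ) 1, (visits T N C B u : ℝ≥0∞)
      = ENNReal.ofReal (C.card * N * x) := by
    rw [lintegral_visits T N hT hN C hC hne hB, h, ← ENNReal.ofReal_natCast,
      ← ENNReal.ofReal_mul (by positivity), Nat.cast_mul]
  have hav : ⨍⁻ u in Set.Ico (0 : ℝ) 1, (visits T N C B u : ℝ≥0∞) ∂volume
      = ENNReal.ofReal (C.card * N * x) := by
    rw [setLAverage_eq, hint]; simp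
  have h0 : volume (Set.Ico (0 : ℝ) 1) ≠ 0 := by simp
  have h0' : volume (Set.Ico (0 : ℝ) 1) ≠ ⊤ := by simp
  have hpos : 0 ≤ C.card * N * x := by positivity
  constructor
  · have hm : Measurable fun u : ℝ => (visits T N C B u : ℝ≥0∞) := by
      have h0 : Measurable (B.indicator (fun _ => (1 : ℕ))) := measurable_const.indicator hB
      refine (measurable_from_top (f := fun n : ℕ => (n : ℝ≥0∞))).comp ?_
      refine Finset.measurable_sum _ fun t _ => Finset.measurable_sum _ fun c _ => ?_
      exact h0.comp (by fun_prop)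
    obtain ⟨u, hu, hle⟩ := exists_le_setLAverage h0 h0' hm.aemeasurable
    refine ⟨u, hu, ?_⟩
    rw [hav, ← ENNReal.ofReal_natCast, ENNReal.ofReal_le_ofReal_iff hpos] at hle
    exact hle
  · obtain ⟨u, hu, hle⟩ := exists_setLAverage_le (f := fun u : ℝ => (visits T N C B u : ℝ≥0∞))
      h0 measurableSet_Ico.nullMeasurableSet (by rw [hint]; exact ENNReal.ofReal_ne_top)
    refine ⟨u, hu, ?_⟩
    rw [hav, ← ENNReal.ofReal_natCast, ENNReal.ofReal_le_ofReal_iff (by positivity)] at hle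
    exact hle

/-! ### The number of cuts bounds the number of changes of membership -/

/-- A set achievable with `m` cuts agrees almost everywhere on `[0,1)` with the preimage of a set
of indices under a monotone map to `{0, …, m}`, namely the index of the interval containing
a point. -/
lemma exists_monotone_index {m : ℕ} {A : Set ℝ} (hA : AchievableWithCuts m A) :
    ∃ (r : ℝ → ℕ) (S : Set ℕ), Monotone r ∧ (∀ x, r x ≤ m) ∧ MeasurableSet A ∧
      ∃ Z : Set ℝ, Z.Finite ∧ ∀ x ∈ Set.Ico (0 : ℝ) 1, x ∉ Z → (x ∈ A ↔ r x ∈ S) := by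
  classical
  obtain ⟨y, hy, hy0, hy1, S, rfl⟩ := hA
  set Y : ℕ → ℝ := fun i => y ⟨min i (m + 1), by omega⟩ with hY
  have hYm : Monotone Y := fun i j hij => hy (by
    simp only [Fin.mk_le_mk]; exact min_le_min_right _ hij)
  have hY0 : Y 0 = 0 := by rw [← hy0]; rfl
  have hY1 : Y (m + 1) = 1 := by rw [← hy1]; simp [hY, Fin.last]
  have hYc : ∀ i : Fin (m + 1), Y i = y i.castSucc := by
    intro i
    simp only [hY]; congr 1; ext; simp
  have hYs : ∀ i : Fin (m + 1), Y (i + 1) = y i.succ := by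
    intro i
    simp only [hY]; congr 1; ext; simp; omega
  refine ⟨fun x => Nat.findGreatest (fun i => Y i ≤ x) m, {j | ∃ i ∈ S, (i : ℕ) = j},
    ?_, ?_, ?_, Set.range y, Set.finite_range y, ?_⟩
  · intro a b hab
    exact Nat.findGreatest_mono_left (fun i hi => le_trans hi hab) m
  · intro x; exact Nat.findGreatest_le m
  · exact Finset.measurableSet_biUnion _ fun i _ => measurableSet_Icc
  · intro x hx hxy
    set r := Nat.findGreatest (fun i => Y i ≤ x) m with hr
    have hrm : r ≤ m := Nat.findGreatest_le m
    have hr1 : Y r ≤ x := Nat.findGreatest_spec (P := fun i => Y i ≤ x) (Nat.zero_le m)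
      (by rw [hY0]; exact hx.1)
    have hr2 : x < Y (r + 1) := by
      by_contra! hcon
      rcases Nat.lt_or_ge r m with h | h
      · have := Nat.le_findGreatest (P := fun i => Y i ≤ x) (show r + 1 ≤ m from h) hcon
        omega
      · have : r = m := le_antisymm hrm h
        rw [this, hY1] at hcon
        exact absurd hx.2 (not_lt.2 hcon)
    simp only [Set.mem_iUnion, Set.mem_ofPred_eq, exists_prop]
    constructor
    · rintro ⟨i, hi, h1, h2⟩
      refine ⟨i, hi, le_antisymm ?_ ?_⟩
      · exact Nat.le_findGreatest (P := fun i => Y i ≤ x) (by omega) (by rw [hYc]; exact h1)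
      · by_contra! hlt
        have h3 : Y (i + 1) ≤ x := (hYm hlt).trans hr1
        rw [hYs] at h3
        exact hxy ⟨i.succ, le_antisymm h3 h2⟩
    · rintro ⟨i, hi, hir⟩
      refine ⟨i, hi, ?_, ?_⟩
      · rw [← hYc, hir]; exact hr1
      · rw [← hYs, hir]; exact hr2.le

/-- Along an alternating chain `p 0 ≤ p' 0 ≤ p 1 ≤ p' 1 ≤ ⋯`, each change of a `{0,1}`-valued
function of the index costs at least one. Each point is adjacent to two others, which gives the
factor two. -/
lemma two_mul_sum_le (b : ℕ → ℤ) (hb : ∀ i, b i = 0 ∨ b i = 1) (p p' : ℕ → ℕ)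
    (h1 : ∀ s, p s ≤ p' s) (h2 : ∀ s, p' s ≤ p (s + 1)) (K : ℕ) :
    2 * ∑ s ∈ Finset.range K, (b (p s) - b (p' s)) ≤ p K - p 0 + b (p 0) - b (p K) := by
  have key : ∀ i j : ℕ, i ≤ j → b i - b j ≤ (j : ℤ) - i ∧ b j - b i ≤ (j : ℤ) - i := by
    intro i j hij
    rcases hij.eq_or_lt with rfl | h
    · simp
    · rcases hb i with hi | hi <;> rcases hb j with hj | hj <;> rw [hi, hj] <;>
        constructor <;> omega
  induction K with
  | zero => simp
  | succ K ih =>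
    rw [Finset.sum_range_succ]
    have a1 := (key _ _ (h1 K)).1
    have a2 := (key _ _ (h2 K)).2
    linarith

lemma cellMeasure_congr (T N : ℕ) (C : Finset ℕ) (hT : 0 < T) (hN : 0 < N)
    (hC : C ⊆ Finset.range T) {A B Z : Set ℝ} (hA : MeasurableSet A) (hB : MeasurableSet B)
    (hZ : Z.Finite) (h : ∀ x ∈ Set.Ico (0 : ℝ) 1, x ∉ Z → (x ∈ A ↔ x ∈ B)) :
    cellMeasure T N C A = cellMeasure T N C B := by
  have hTN : (0 : ℝ) < T * N := by positivity
  rw [cellMeasure_apply T N C hC hA, cellMeasure_apply T N C hC hB]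
  congr 1
  refine Finset.sum_congr rfl fun t ht => Finset.sum_congr rfl fun c hc => measure_congr ?_
  have hae : ∀ᵐ x : ℝ, x ∉ Z := measure_eq_zero_iff_ae_notMem.1 (hZ.measure_zero volume)
  filter_upwards [hae] with x hx
  refine propext (and_congr_right fun hxc => ?_)
  refine h x ⟨?_, ?_⟩ hx
  · exact le_trans (by positivity) hxc.1
  · refine lt_of_lt_of_le hxc.2 ((div_le_one hTN).2 ?_)
    have h1 : c < T := Finset.mem_range.1 (hC hc)
    have h2 : t + 1 ≤ N := Finset.mem_range.1 ht
    have h3 : T * t + c + 1 ≤ T * N :=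
      calc T * t + c + 1 ≤ T * (t + 1) := by rw [Nat.mul_succ]; omega
        _ ≤ T * N := Nat.mul_le_mul_left _ h2
    exact_mod_cast h3

/-! ### The pattern of supports -/

/-- The indices `j < n` in the `b`-th block of length `k`, except the first one of the block. -/
def members (n k b : ℕ) : Finset ℕ :=
  (Finset.range n).filter fun j => j % k ≠ 0 ∧ j / k = b

/-- The pattern cells carrying the `i`-th measure. If `k ∤ i`, this is the cell `2 i`. If `k ∣ i`,
it consists of the cells `2 j + 1`, where `j` runs over the other members of the block of `i`;
when there are none (for `k ≥ 2`: when `i = n - 1`), the cell `2 i` is used to obtain a probability measure. -/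
def support (n k i : ℕ) : Finset ℕ :=
  if i % k ≠ 0 then {2 * i}
  else if (members n k (i / k)).Nonempty then (members n k (i / k)).image fun j => 2 * j + 1
  else {2 * i}

lemma support_subset {n k i : ℕ} (hi : i < n) : support n k i ⊆ Finset.range (2 * n) := by
  intro c hc
  rw [Finset.mem_range]
  unfold support at hc
  split_ifs at hc
  · simp only [Finset.mem_singleton] at hc; omega
  · simp only [Finset.mem_image, members, Finset.mem_filter, Finset.mem_range] at hc
    obtain ⟨j, hj, rfl⟩ := hc
    omega
  · simp only [Finset.mem_singleton] at hc; omega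

lemma support_nonempty (n k i : ℕ) : (support n k i).Nonempty := by
  unfold support
  split_ifs with h1 h2
  · simp
  · exact h2.image _
  · simp

lemma card_members_lt {n k b : ℕ} (hk : 0 < k) : (members n k b).card < k := by
  have h : (members n k b).card ≤ (Finset.Ico 1 k).card := by
    refine Finset.card_le_card_of_injOn (fun j => j % k) ?_ ?_
    · intro j hj
      simp only [members, Finset.coe_filter, Set.mem_ofPred_eq] at hj
      simp only [Finset.coe_Ico, Set.mem_Ico]
      exact ⟨Nat.pos_of_ne_zero hj.2.1, Nat.mod_lt _ hk⟩
    · intro i hi j hj hij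
      simp only [members, Finset.coe_filter, Set.mem_ofPred_eq] at hi hj
      simp only at hij
      rw [← Nat.div_add_mod i k, ← Nat.div_add_mod j k, hi.2.2, hj.2.2, hij]
  rw [Nat.card_Ico] at h
  omega

/-- At least `n - (n + k - 1) / k` of the indices below `n` are not divisible by `k`. -/
lemma card_not_dvd (n k : ℕ) (hk : 0 < k) :
    k * n ≤ k * ((Finset.range n).filter fun j => j % k ≠ 0).card + (n + k - 1) := by
  have h := Finset.card_filter_add_card_filter_not (s := Finset.range n) (fun j => j % k ≠ 0)
  rw [Finset.card_range] at h
  have h2 : ((Finset.range n).filter fun j => ¬ j % k ≠ 0).card ≤ (n + k - 1) / k := by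
    refine (Finset.card_le_card_of_injOn (t := Finset.range ((n + k - 1) / k))
      (fun j => j / k) ?_ ?_).trans_eq (Finset.card_range _)
    · intro j hj
      simp only [Finset.coe_filter, Finset.mem_range, Set.mem_ofPred_eq, not_not] at hj
      simp only [Finset.coe_range, Set.mem_Iio]
      rw [Nat.lt_iff_add_one_le, Nat.le_div_iff_mul_le hk, add_mul, one_mul,
        Nat.div_mul_cancel (Nat.dvd_of_mod_eq_zero hj.2)]
      omega
    · intro i hi j hj hij
      simp only [Finset.coe_filter, Set.mem_ofPred_eq, not_not] at hi hj
      simp only at hij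
      rw [← Nat.div_add_mod i k, ← Nat.div_add_mod j k, hi.2, hj.2, hij]
  have h3 : k * ((n + k - 1) / k) ≤ n + k - 1 := Nat.mul_div_le _ _
  have h4 := Nat.mul_le_mul_left k h2
  have h5 := congrArg (k * ·) h
  simp only [mul_add] at h5
  omega

/-- The combinatorial core: if every measure of the family takes the value `l / k` on `A`, then
twice the number of indices not divisible by `k` is at most `m + 1`. -/
lemma two_mul_card_le {l k n N q m : ℕ} (hn : 0 < n) (hN : 0 < N) (hk : 0 < k)
    (hq : N * l = k * q + 1) {A : Set ℝ} (hA : AchievableWithCuts m A)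
    (hμ : ∀ i < n, cellMeasure (2 * n) N (support n k i) A = ENNReal.ofReal ((l : ℝ) / k)) :
    2 * ((Finset.range n).filter fun j => j % k ≠ 0).card ≤ m + 1 := by
  classical
  obtain ⟨r, S, hr, hrm, hAm, Z, hZ, hAZ⟩ := exists_monotone_index hA
  set B : Set ℝ := r ⁻¹' S with hBdef
  have hB : MeasurableSet B := hr.measurable (MeasurableSet.of_discrete (s := S))
  have hkR : (0 : ℝ) < k := by exact_mod_cast hk
  have hT : 0 < 2 * n := by omega
  have hqR : (N : ℝ) * (l / k) = q + 1 / k := by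
    field_simp
    exact_mod_cast hq
  have hex : ∀ i < n, _ := fun i hi => exists_visits (2 * n) N hT hN (support n k i)
    (support_subset hi) (support_nonempty n k i) hB (x := (l : ℝ) / k) (by positivity)
    (by rw [← cellMeasure_congr (2 * n) N _ hT hN (support_subset hi) hAm hB hZ hAZ, hμ i hi])
  -- `a x` is the indicator of `B` at the point whose position, in units of cells, is `x`.
  set a : ℝ → ℕ := fun x => B.indicator (fun _ => (1 : ℕ)) (x / ((2 * n : ℕ) * N)) with ha
  have hup : ∀ j, ∃ u ∈ Set.Ico (0 : ℝ) 1, j < n → j % k ≠ 0 →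
      q + 1 ≤ ∑ t ∈ Finset.range N, a (((2 * n * t + 2 * j : ℕ) : ℝ) + u) := by
    intro j
    by_cases hj : j < n ∧ j % k ≠ 0
    · obtain ⟨u, hu, hle⟩ := (hex j hj.1).2
      refine ⟨u, hu, fun _ _ => ?_⟩
      have hs : support n k j = {2 * j} := by rw [support, if_pos hj.2]
      rw [hs, Finset.card_singleton, Nat.cast_one, one_mul, hqR] at hle
      have hlt : (q : ℝ) < visits (2 * n) N {2 * j} B u :=
        lt_of_lt_of_le (by linarith [one_div_pos.2 hkR]) hle
      have hlt' : q + 1 ≤ visits (2 * n) N {2 * j} B u := by exact_mod_cast hlt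
      simpa only [visits, Finset.sum_singleton] using hlt'
    · exact ⟨0, by simp, fun h1 h2 => absurd ⟨h1, h2⟩ hj⟩
  have hlow : ∀ b, ∃ u ∈ Set.Ico (0 : ℝ) 1, ∑ j ∈ members n k b,
      ∑ t ∈ Finset.range N, a (((2 * n * t + (2 * j + 1) : ℕ) : ℝ) + u)
        ≤ (members n k b).card * q := by
    intro b
    by_cases hb : (members n k b).Nonempty
    · obtain ⟨j, hj⟩ := hb
      have hj' := hj
      simp only [members, Finset.mem_filter, Finset.mem_range] at hj'
      have hkb : k * b < n := by
        have := Nat.mul_div_le j k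
        rw [hj'.2.2] at this
        omega
      obtain ⟨u, hu, hle⟩ := (hex (k * b) hkb).1
      refine ⟨u, hu, ?_⟩
      have hs : support n k (k * b) = (members n k b).image fun j => 2 * j + 1 := by
        rw [support, if_neg (by simp), Nat.mul_div_cancel_left b hk, if_pos ⟨j, hj⟩]
      have hinj : Function.Injective fun j : ℕ => 2 * j + 1 := fun x y h => by
        simp only at h; omega
      rw [hs, Finset.card_image_of_injective _ hinj, mul_assoc, hqR] at hle
      have hc : ((members n k b).card : ℝ) / k < 1 := by
        rw [div_lt_one hkR]; exact_mod_cast card_members_lt hk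
      have hlt : (visits (2 * n) N ((members n k b).image fun j => 2 * j + 1) B u : ℝ)
          < (members n k b).card * q + 1 := by
        refine lt_of_le_of_lt hle ?_
        rw [mul_add, mul_one_div]; linarith
      have hlt' : visits (2 * n) N ((members n k b).image fun j => 2 * j + 1) B u
          < (members n k b).card * q + 1 := by exact_mod_cast hlt
      rw [Finset.sum_comm]
      simp only [visits, Finset.sum_image hinj.injOn] at hlt'
      exact Nat.lt_succ_iff.1 hlt'
    · rw [Finset.not_nonempty_iff_eq_empty] at hb
      exact ⟨0, by simp, by simp [hb]⟩
  choose v hv hvup using hup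
  choose w hw hwlow using hlow
  -- In the positions `j` with `k ∣ j` both points of the chain coincide and contribute nothing.
  set α : ℕ → ℝ := fun j => if j % k ≠ 0 then v j else 0 with hα
  set β : ℕ → ℝ := fun j => if j % k ≠ 0 then 1 + w (j / k) else 0 with hβ
  have hα0 : ∀ j, 0 ≤ α j := by
    intro j; simp only [hα]; split_ifs
    · exact (hv j).1
    · exact le_rfl
  have hαβ : ∀ j, α j ≤ β j := by
    intro j; simp only [hα, hβ]; split_ifs
    · linarith [(hv j).2, (hw (j / k)).1]
    · exact le_rfl
  have hβ2 : ∀ j, β j ≤ 2 := by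
    intro j; simp only [hβ]; split_ifs
    · linarith [(hw (j / k)).2]
    · norm_num
  have hpos : (0 : ℝ) < ((2 * n : ℕ) : ℝ) * N := by positivity
  have hchain := two_mul_sum_le (S.indicator fun _ => (1 : ℤ))
    (fun i => by by_cases h : i ∈ S <;> simp [h])
    (fun s => r ((((2 * s : ℕ) : ℝ) + α (s % n)) / ((2 * n : ℕ) * N)))
    (fun s => r ((((2 * s : ℕ) : ℝ) + β (s % n)) / ((2 * n : ℕ) * N)))
    (fun s => hr (by
      rw [div_le_div_iff_of_pos_right hpos]; linarith [hαβ (s % n)]))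
    (fun s => hr (by
      rw [div_le_div_iff_of_pos_right hpos]
      have := hβ2 (s % n)
      have := hα0 ((s + 1) % n)
      push_cast
      linarith)) (n * N)
  have hSa : ∀ x : ℝ, S.indicator (fun _ => (1 : ℤ)) (r (x / ((2 * n : ℕ) * N))) = (a x : ℤ) := by
    intro x
    by_cases h : r (x / ((2 * n : ℕ) * N)) ∈ S
    · have h' : x / ((2 * n : ℕ) * N) ∈ B := h
      simp only [ha]
      rw [Set.indicator_of_mem h, Set.indicator_of_mem h']; rfl
    · have h' : x / ((2 * n : ℕ) * N) ∉ B := h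
      simp only [ha]
      rw [Set.indicator_of_notMem h, Set.indicator_of_notMem h']; rfl
  have ha01 : ∀ x, a x ≤ 1 := by
    intro x
    exact Set.indicator_le_self' (fun _ _ => zero_le_one) _
  simp only [hSa] at hchain
  rw [sum_range_mul_eq, Finset.sum_comm] at hchain
  set J := (Finset.range n).filter fun j => j % k ≠ 0 with hJ
  have hsum : ∑ j ∈ Finset.range n, ∑ t ∈ Finset.range N,
        ((a (((2 * (n * t + j) : ℕ) : ℝ) + α ((n * t + j) % n)) : ℤ)
          - (a (((2 * (n * t + j) : ℕ) : ℝ) + β ((n * t + j) % n)) : ℤ))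
      = ((∑ j ∈ J, ∑ t ∈ Finset.range N, a (((2 * n * t + 2 * j : ℕ) : ℝ) + v j) : ℕ) : ℤ)
        - ((∑ j ∈ J, ∑ t ∈ Finset.range N,
            a (((2 * n * t + (2 * j + 1) : ℕ) : ℝ) + w (j / k)) : ℕ) : ℤ) := by
    rw [hJ, Finset.sum_filter, Finset.sum_filter]
    push_cast
    rw [← Finset.sum_sub_distrib]
    refine Finset.sum_congr rfl fun j hj => ?_
    have hmod : ∀ t, (n * t + j) % n = j := fun t => by
      rw [Nat.mul_add_mod, Nat.mod_eq_of_lt (Finset.mem_range.1 hj)]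
    by_cases hjk : j % k ≠ 0
    · simp only [hmod, hα, hβ, if_pos hjk]
      rw [← Finset.sum_sub_distrib]
      refine Finset.sum_congr rfl fun t _ => ?_
      congr 3 <;> ring_nf
    · simp only [hmod, hα, hβ, if_neg hjk]
      simp
  rw [hsum] at hchain
  have hupJ : J.card * (q + 1) ≤
      ∑ j ∈ J, ∑ t ∈ Finset.range N, a (((2 * n * t + 2 * j : ℕ) : ℝ) + v j) := by
    rw [← smul_eq_mul]
    refine Finset.card_nsmul_le_sum _ _ _ fun j hj => ?_
    simp only [hJ, Finset.mem_filter, Finset.mem_range] at hj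
    exact hvup j hj.1 hj.2
  have hmaps : ∀ j ∈ J, j / k ∈ Finset.range n := fun j hj => by
    simp only [hJ, Finset.mem_filter, Finset.mem_range] at hj ⊢
    exact (Nat.div_le_self j k).trans_lt hj.1
  have hmem : ∀ b, J.filter (fun j => j / k = b) = members n k b := fun b => by
    rw [hJ, members, Finset.filter_filter]
  have hlowJ : ∑ j ∈ J, ∑ t ∈ Finset.range N,
      a (((2 * n * t + (2 * j + 1) : ℕ) : ℝ) + w (j / k)) ≤ J.card * q := by
    rw [← Finset.sum_fiberwise_of_maps_to hmaps, Finset.card_eq_sum_card_fiberwise hmaps,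
      Finset.sum_mul]
    refine Finset.sum_le_sum fun b _ => ?_
    rw [hmem b]
    refine le_trans (le_of_eq ?_) (hwlow b)
    refine Finset.sum_congr rfl fun j hj => ?_
    simp only [members, Finset.mem_filter] at hj
    rw [hj.2.2]
  have b1 := hrm ((((2 * (n * N) : ℕ) : ℝ) + α (n * N % n)) / ((2 * n : ℕ) * N))
  have b2 := ha01 (((2 * 0 : ℕ) : ℝ) + α (0 % n))
  rw [mul_add, mul_one] at hupJ
  omega

/-- For coprime `1 ≤ l < k` and every `n ≥ 1`, there exist `n`
step-function probability measures on `[0,1]` such that any set achievable with `m`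
cuts on which every measure takes value exactly `l/k` requires
`m ≥ 2(k−1)n/k − k`. -/
theorem icd_lower_bound
    (l k : ℕ) (hl : 1 ≤ l) (hlk : l < k) (hcop : Nat.Coprime l k)
    (n : ℕ) (hn : 0 < n) :
    ∃ μ : Fin n → Measure ℝ, (∀ i, IsStepMeasure (μ i)) ∧
      ∀ (m : ℕ) (A : Set ℝ), AchievableWithCuts m A →
        (∀ i, μ i A = ENNReal.ofReal ((l : ℝ) / (k : ℝ))) →
        2 * ((k : ℝ) - 1) * (n : ℝ) / (k : ℝ) - (k : ℝ) ≤ (m : ℝ) := by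
  obtain ⟨N, -, hN⟩ := Nat.exists_mul_mod_eq_one_of_coprime hcop (by omega)
  have hN0 : 0 < N := Nat.pos_of_ne_zero (by rintro rfl; simp at hN)
  have hq : N * l = k * (l * N / k) + 1 := by
    rw [mul_comm N l, ← hN]; exact (Nat.div_add_mod _ _).symm
  have hk : 0 < k := by omega
  refine ⟨fun i => cellMeasure (2 * n) N (support n k i), fun i => ?_, fun m A hA hμ => ?_⟩
  · exact isStepMeasure_cellMeasure _ _ (by omega) hN0 _ (support_subset i.2)
      (support_nonempty n k i)
  · have h1 := two_mul_card_le hn hN0 hk hq hA (fun i hi => hμ ⟨i, hi⟩)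
    have h2 := card_not_dvd n k hk
    set J := ((Finset.range n).filter fun j => j % k ≠ 0).card
    have h1R : 2 * (J : ℝ) ≤ m + 1 := by exact_mod_cast h1
    have h2R : (k : ℝ) * n ≤ k * J + (n + k - 1) := by
      have h3 : k * n + 1 ≤ k * J + (n + k) := by omega
      have h3R : (k : ℝ) * n + 1 ≤ k * J + (n + k) := by exact_mod_cast h3
      linarith
    have hkR : (2 : ℝ) ≤ k := by exact_mod_cast (show 2 ≤ k by omega)
    rw [sub_le_iff_le_add, div_le_iff₀ (by linarith)]
    -- Since `k ≥ 2`, the rounding loss `2 (k - 1) / k + 1` is at most `k`.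
    nlinarith [mul_le_mul_of_nonneg_left h1R (by linarith : (0 : ℝ) ≤ k),
      mul_nonneg (sub_nonneg.2 hkR) (by linarith : (0 : ℝ) ≤ (k : ℝ) - 1)]
end

section
/- For every real number α ∈ [0,1] and every pair of step-function probability measures μ_1, μ_2 on [0,1], there exists a set A ⊆ [0,1] achievable with 2 cuts such that μ_1(A) = α and μ_2(A) = α. -/
/-!
Let `F`, `G` be the distribution functions of `μ1`, `μ2`; they are continuous because the measures
have no atoms. Bend `[0,1]` into a circle: an arc of the circle is either an interval or the union
of an initial and a final interval, so every arc is achievable with two cuts. Going round the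
circle twice lifts `F` and `G` to `wrap F` and `wrap G` on `[0,2]`, and the arc from `s ∈ [0,1]` to
`t ∈ [s, s+1]` has `μ1`-measure `wrap F t - wrap F s`, and likewise for `μ2` and `G`.

Suppose first that `F` is strictly increasing, so that the circle can be parametrised by
`μ1`-measure. In that parameter `y`, the difference `h = wrap G - wrap F` is a continuous
`1`-periodic function, and an arc of `μ1`-measure `α` has `μ2`-measure `α` exactly when
`h (y + α) = h y`. Now `h (y + α) - h y` is `≤ 0` where `h` is maximal and `≥ 0` where `h` is
minimal, so it vanishes somewhere (`exists_arc_perturbed`).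

In general, `ε x` is added to `wrap F` to make it strictly increasing; minimising the defect
`|wrap F t - wrap F s - α|` over the compact set of arcs to which `μ1` and `μ2` assign the same
measure lets `ε` go to zero (`exists_arc`).
-/

open MeasureTheory
open scoped ENNReal

/-- The lift to `[0,2]` of a distribution function `F` of a measure on `[0,1]`, the interval being
bent into a circle: it equals `F x` on `[0,1]` and `1 + F (x - 1)` on `[1,2]`. -/
def wrap (F : ℝ → ℝ) (x : ℝ) : ℝ := F x + F (x - 1)

lemma continuous_wrap {F : ℝ → ℝ} (hF : Continuous F) : Continuous (wrap F) := by
  unfold wrap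
  fun_prop

lemma wrap_add_one {F : ℝ → ℝ} (h0 : ∀ x ≤ 0, F x = 0) (h1 : ∀ x, 1 ≤ x → F x = 1)
    {x : ℝ} (hx : x ∈ Set.Icc (0 : ℝ) 1) : wrap F (x + 1) = wrap F x + 1 := by
  simp only [wrap, add_sub_cancel_right]
  rw [h1 (x + 1) (by linarith [hx.1]), h0 (x - 1) (by linarith [hx.2])]
  ring

/-- The conclusion of `exists_arc` when `wrap F` is replaced by the strictly increasing function
`wrap F x + ε * x`, whose increment over one turn is `1 + ε`. -/
lemma exists_arc_perturbed {F G : ℝ → ℝ} (hF : Continuous F) (hG : Continuous G)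
    (hFm : Monotone F)
    (hF0 : ∀ x ≤ 0, F x = 0) (hF1 : ∀ x, 1 ≤ x → F x = 1)
    (hG0 : ∀ x ≤ 0, G x = 0) (hG1 : ∀ x, 1 ≤ x → G x = 1)
    {α : ℝ} (h0 : 0 ≤ α) (h1 : α ≤ 1) {ε : ℝ} (hε : 0 < ε) :
    ∃ s ∈ Set.Icc (0 : ℝ) 1, ∃ t ∈ Set.Icc s (s + 1),
      wrap G t - wrap F t = wrap G s - wrap F s ∧
      wrap F t - wrap F s + ε * (t - s) = α * (1 + ε) := by
  set D : ℝ → ℝ := fun x => wrap G x - wrap F x with hD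
  have hDc : Continuous D := (continuous_wrap hG).sub (continuous_wrap hF)
  have hDper : ∀ x ∈ Set.Icc (0 : ℝ) 1, D (x + 1) = D x := by
    intro x hx
    simp only [hD]
    rw [wrap_add_one hF0 hF1 hx, wrap_add_one hG0 hG1 hx]
    ring
  set Φ : ℝ → ℝ := fun x => wrap F x + ε * x with hΦ
  have hΦc : Continuous Φ := (continuous_wrap hF).add (by fun_prop)
  have hwm : Monotone (wrap F) := fun x y hxy =>
    add_le_add (hFm hxy) (hFm (by linarith))
  have hΦm : StrictMono Φ := by
    intro x y hxy
    have := hwm hxy.le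
    have := mul_lt_mul_of_pos_left hxy hε
    simp only [hΦ]
    linarith
  have hF_nonneg : ∀ x, 0 ≤ F x := fun x => by
    rw [← hF0 (min x 0) (min_le_right _ _)]
    exact hFm (min_le_left _ _)
  have hF_le : ∀ x, F x ≤ 1 := fun x => by
    rw [← hF1 (max x 1) (le_max_right _ _)]
    exact hFm (le_max_left _ _)
  have hΦs : Function.Surjective Φ := by
    refine hΦc.surjective ?_ ?_
    · refine Filter.tendsto_atTop_mono (f := fun x => ε * x) (fun x => ?_)
        (Filter.tendsto_id.const_mul_atTop hε)
      simp only [hΦ, wrap]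
      linarith [hF_nonneg x, hF_nonneg (x - 1)]
    · refine Filter.tendsto_atBot_mono (f := fun x => 2 + ε * x) (fun x => ?_)
        (Filter.tendsto_atBot_add_const_left _ _ (Filter.tendsto_id.const_mul_atBot hε))
      simp only [hΦ, wrap]
      linarith [hF_le x, hF_le (x - 1)]
  let e : ℝ ≃o ℝ := hΦm.orderIsoOfSurjective Φ hΦs
  have he : ∀ x, e x = Φ x := fun x => rfl
  have hes : ∀ x, e.symm (Φ x) = x := fun x => e.symm_apply_apply x
  have hse : ∀ y, Φ (e.symm y) = y := fun y => e.apply_symm_apply y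
  have hec : Continuous e.symm := e.symm.continuous
  have hΦ0 : Φ 0 = 0 := by
    simp [hΦ, wrap, hF0 0 le_rfl, hF0 (-1) (by norm_num)]
  have hΦ1 : ∀ x ∈ Set.Icc (0 : ℝ) 1, Φ (x + 1) = Φ x + (1 + ε) := by
    intro x hx
    simp only [hΦ]
    rw [wrap_add_one hF0 hF1 hx]
    ring
  have hshift_nonneg : 0 ≤ α * (1 + ε) := by positivity
  have hshift_le : α * (1 + ε) ≤ 1 + ε := mul_le_of_le_one_left (by linarith) h1
  -- Moving forward by a fraction `α` of a full turn ends at most one turn later.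
  have hmove : ∀ x ∈ Set.Icc (0 : ℝ) 1,
      e.symm (Φ x + α * (1 + ε)) ∈ Set.Icc x (x + 1) := by
    intro x hx
    constructor
    · rw [← hΦm.le_iff_le, hse]
      linarith
    · rw [← hΦm.le_iff_le, hse, hΦ1 x hx]
      linarith
  obtain ⟨p, hp, hpmin⟩ := isCompact_Icc.exists_isMinOn
    (Set.nonempty_Icc.2 (zero_le_one (α := ℝ))) hDc.continuousOn
  obtain ⟨q, hq, hqmax⟩ := isCompact_Icc.exists_isMaxOn
    (Set.nonempty_Icc.2 (zero_le_one (α := ℝ))) hDc.continuousOn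
  -- By periodicity the extrema over `[0,1]` are extrema over both turns.
  have hext : ∀ x ∈ Set.Icc (0 : ℝ) 2, D p ≤ D x ∧ D x ≤ D q := by
    intro x hx
    rcases le_total x 1 with hx1 | hx1
    · exact ⟨hpmin ⟨hx.1, hx1⟩, hqmax ⟨hx.1, hx1⟩⟩
    · have hm : x - 1 ∈ Set.Icc (0 : ℝ) 1 := ⟨by linarith, by linarith [hx.2]⟩
      have := hDper (x - 1) hm
      rw [sub_add_cancel] at this
      rw [this]
      exact ⟨hpmin hm, hqmax hm⟩
  let ψ : ℝ → ℝ := fun x => D (e.symm (Φ x + α * (1 + ε))) - D x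
  have hψc : Continuous ψ := by
    refine (hDc.comp (hec.comp (hΦc.add continuous_const))).sub hDc
  have hψp : 0 ≤ ψ p := by
    have := hmove p hp
    exact sub_nonneg.2 (hext _ ⟨by linarith [this.1, hp.1], by linarith [this.2, hp.2]⟩).1
  have hψq : ψ q ≤ 0 := by
    have := hmove q hq
    exact sub_nonpos.2 (hext _ ⟨by linarith [this.1, hq.1], by linarith [this.2, hq.2]⟩).2
  obtain ⟨s, hs, hs0⟩ := intermediate_value_uIcc (a := q) (b := p) hψc.continuousOn
    (Set.mem_uIcc_of_le hψq hψp)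
  have hs01 : s ∈ Set.Icc (0 : ℝ) 1 := Set.uIcc_subset_Icc hq hp hs
  refine ⟨s, hs01, e.symm (Φ s + α * (1 + ε)), hmove s hs01, sub_eq_zero.1 hs0, ?_⟩
  have := hse (Φ s + α * (1 + ε))
  simp only [hΦ] at this ⊢
  linarith

/-- Some arc of the circle has measure `α` under both measures. -/
lemma exists_arc {F G : ℝ → ℝ} (hF : Continuous F) (hG : Continuous G)
    (hFm : Monotone F)
    (hF0 : ∀ x ≤ 0, F x = 0) (hF1 : ∀ x, 1 ≤ x → F x = 1)
    (hG0 : ∀ x ≤ 0, G x = 0) (hG1 : ∀ x, 1 ≤ x → G x = 1)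
    {α : ℝ} (h0 : 0 ≤ α) (h1 : α ≤ 1) :
    ∃ s ∈ Set.Icc (0 : ℝ) 1, ∃ t ∈ Set.Icc s (s + 1),
      wrap F t - wrap F s = α ∧ wrap G t - wrap G s = α := by
  have hcF := continuous_wrap hF
  have hcG := continuous_wrap hG
  let K : Set (ℝ × ℝ) := (Set.Icc 0 1 ×ˢ Set.Icc 0 2) ∩
    ({p | p.1 ≤ p.2} ∩ {p | p.2 ≤ p.1 + 1} ∩
      {p | wrap G p.2 - wrap F p.2 = wrap G p.1 - wrap F p.1})
  have hK : IsCompact K := by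
    refine (isCompact_Icc.prod isCompact_Icc).inter_right ?_
    refine ((isClosed_le (by fun_prop) (by fun_prop)).inter
      (isClosed_le (by fun_prop) (by fun_prop))).inter
      (isClosed_eq (by fun_prop) (by fun_prop))
  have hpert : ∀ ε > 0, ∃ p ∈ K, |wrap F p.2 - wrap F p.1 - α| ≤ ε := by
    intro ε hε
    obtain ⟨s, hs, t, ht, hD, hα⟩ :=
      exists_arc_perturbed hF hG hFm hF0 hF1 hG0 hG1 h0 h1 hε
    refine ⟨(s, t), ⟨⟨hs, by linarith [hs.1, ht.1], by linarith [hs.2, ht.2]⟩,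
      ⟨ht.1, ht.2⟩, hD⟩, ?_⟩
    have hrw : wrap F t - wrap F s - α = ε * (α - (t - s)) := by linarith
    have hb : |α - (t - s)| ≤ 1 := abs_le.2 ⟨by linarith [ht.2], by linarith [ht.1]⟩
    simp only [hrw, abs_mul, abs_of_pos hε]
    exact mul_le_of_le_one_right hε.le hb
  obtain ⟨p₀, hp₀, -⟩ := hpert 1 one_pos
  obtain ⟨p, hp, hmin⟩ := hK.exists_isMinOn ⟨p₀, hp₀⟩
    (f := fun p : ℝ × ℝ => |wrap F p.2 - wrap F p.1 - α|)
    (Continuous.continuousOn (by fun_prop))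
  have hzero : |wrap F p.2 - wrap F p.1 - α| ≤ 0 := by
    refine le_of_forall_pos_le_add fun ε hε => ?_
    obtain ⟨q, hq, hqε⟩ := hpert ε hε
    rw [zero_add]
    exact (hmin hq).trans hqε
  have hFα : wrap F p.2 - wrap F p.1 = α := sub_eq_zero.1 (abs_nonpos_iff.1 hzero)
  obtain ⟨⟨hs, -⟩, ⟨hst, hts⟩, hD⟩ := hp
  refine ⟨p.1, hs, p.2, ⟨hst, hts⟩, hFα, ?_⟩
  have hD' : wrap G p.2 - wrap F p.2 = wrap G p.1 - wrap F p.1 := hD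
  linarith

open ProbabilityTheory in
lemma continuous_cdf (μ : Measure ℝ) [IsProbabilityMeasure μ] [NullSingletonClass μ] :
    Continuous (cdf μ) := by
  rw [continuous_iff_continuousAt]
  intro x
  rw [(monotone_cdf μ).continuousAt_iff_leftLim_eq_rightLim, StieltjesFunction.rightLim_eq]
  have h := StieltjesFunction.measure_singleton (cdf μ) x
  rw [measure_cdf, measure_singleton, eq_comm, ENNReal.ofReal_eq_zero] at h
  exact le_antisymm ((monotone_cdf μ).leftLim_le le_rfl) (by linarith)

lemma IsStepMeasure.nullSingletonClass {μ : Measure ℝ} (h : IsStepMeasure μ) : NullSingletonClass μ := by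
  obtain ⟨-, n, a, b, c, -, rfl⟩ := h
  exact ⟨fun x => withDensity_absolutelyContinuous _ _ (measure_singleton x)⟩

lemma IsStepMeasure.measure_compl {μ : Measure ℝ} (h : IsStepMeasure μ) :
    μ (Set.Icc 0 1)ᶜ = 0 := by
  obtain ⟨-, n, a, b, c, hab, rfl⟩ := h
  rw [withDensity_apply _ measurableSet_Icc.compl]
  refine (setLIntegral_congr_fun measurableSet_Icc.compl (g := fun _ => 0) ?_).trans (by simp)
  intro x hx
  refine Finset.sum_eq_zero fun i _ => Set.indicator_of_notMem (fun hxi => hx ?_) _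
  exact ⟨(hab i).1.trans hxi.1, hxi.2.le.trans (hab i).2⟩

section
open ProbabilityTheory

lemma IsStepMeasure.cdf_zero {μ : Measure ℝ} (h : IsStepMeasure μ) {x : ℝ} (hx : x ≤ 0) :
    cdf μ x = 0 := by
  have := h.1
  have := h.nullSingletonClass
  rw [cdf_eq_real, measureReal_def, ← measure_congr Iio_ae_eq_Iic,
    measure_mono_null (fun y hy => ?_) h.measure_compl, ENNReal.toReal_zero]
  exact fun hy' => absurd (hy'.1.trans_lt hy) (not_lt.2 hx)

lemma IsStepMeasure.cdf_one {μ : Measure ℝ} (h : IsStepMeasure μ) {x : ℝ} (hx : 1 ≤ x) :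
    cdf μ x = 1 := by
  have := h.1
  have hc : μ (Set.Iic x)ᶜ = 0 :=
    measure_mono_null (Set.compl_subset_compl.2 fun _ hy => hy.2.trans hx) h.measure_compl
  rw [cdf_eq_real, measureReal_def, (prob_compl_eq_zero_iff measurableSet_Iic).1 hc,
    ENNReal.toReal_one]

lemma IsStepMeasure.measure_Icc {μ : Measure ℝ} (h : IsStepMeasure μ) (s t : ℝ) :
    μ (Set.Icc s t) = ENNReal.ofReal (cdf μ t - cdf μ s) := by
  have := h.1
  have := h.nullSingletonClass
  rw [← measure_congr Ioc_ae_eq_Icc]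
  conv_lhs => rw [← measure_cdf μ]
  rw [StieltjesFunction.measure_Ioc]

lemma IsStepMeasure.measure_union {μ : Measure ℝ} (h : IsStepMeasure μ) {u s : ℝ}
    (hus : u ≤ s) :
    μ (Set.Icc 0 u ∪ Set.Icc s 1) = ENNReal.ofReal (cdf μ u + (1 - cdf μ s)) := by
  have := h.1
  have := h.nullSingletonClass
  have hd : AEDisjoint μ (Set.Icc 0 u) (Set.Icc s 1) :=
    measure_mono_null (t := {s})
      (fun y hy => le_antisymm (hy.1.2.trans hus) hy.2.1) (measure_singleton s)
  rw [measure_union₀ measurableSet_Icc.nullMeasurableSet hd, h.measure_Icc, h.measure_Icc,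
    h.cdf_zero le_rfl, h.cdf_one le_rfl, sub_zero,
    ENNReal.ofReal_add (cdf_nonneg _ _) (sub_nonneg.2 (cdf_le_one _ _))]

end

lemma monotone_cuts {u v : ℝ} (hu : 0 ≤ u) (huv : u ≤ v) (hv : v ≤ 1) :
    Monotone (![0, u, v, 1] : Fin 4 → ℝ) := by
  rw [Fin.monotone_iff_le_succ]
  intro i
  fin_cases i <;> simpa

lemma achievable_Icc {u v : ℝ} (hu : 0 ≤ u) (huv : u ≤ v) (hv : v ≤ 1) :
    AchievableWithCuts 2 (Set.Icc u v) :=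
  ⟨![0, u, v, 1], monotone_cuts hu huv hv, rfl, rfl, {1}, by simp⟩

lemma achievable_union {u v : ℝ} (hu : 0 ≤ u) (huv : u ≤ v) (hv : v ≤ 1) :
    AchievableWithCuts 2 (Set.Icc 0 u ∪ Set.Icc v 1) :=
  ⟨![0, u, v, 1], monotone_cuts hu huv hv, rfl, rfl, {0, 2}, by
    rw [Finset.set_biUnion_insert, Finset.set_biUnion_singleton]; rfl⟩

/-- For every `α ∈ [0,1]` and every pair of step-function probability
measures `μ1, μ2` on `[0,1]`, there is a set achievable with `2` cuts on which both
measures take value exactly `α`. -/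
theorem two_agents_two_cuts
    (α : ℝ) (h0 : 0 ≤ α) (h1 : α ≤ 1)
    (μ1 μ2 : Measure ℝ) (hμ1 : IsStepMeasure μ1) (hμ2 : IsStepMeasure μ2) :
    ∃ A : Set ℝ, AchievableWithCuts 2 A ∧
      μ1 A = ENNReal.ofReal α ∧ μ2 A = ENNReal.ofReal α := by
  have := hμ1.1
  have := hμ1.nullSingletonClass
  have := hμ2.1
  have := hμ2.nullSingletonClass
  obtain ⟨s, hs, t, ht, hF, hG⟩ := exists_arc (continuous_cdf μ1)
    (continuous_cdf μ2) (ProbabilityTheory.monotone_cdf μ1)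
    (fun _ => hμ1.cdf_zero) (fun _ => hμ1.cdf_one)
    (fun _ => hμ2.cdf_zero) (fun _ => hμ2.cdf_one) h0 h1
  have hs1 : s - 1 ≤ 0 := by linarith [hs.2]
  simp only [wrap, hμ1.cdf_zero hs1, hμ2.cdf_zero hs1] at hF hG
  rcases le_total t 1 with ht1 | ht1
  · have ht' : t - 1 ≤ 0 := by linarith
    rw [hμ1.cdf_zero ht'] at hF
    rw [hμ2.cdf_zero ht'] at hG
    refine ⟨Set.Icc s t, achievable_Icc hs.1 ht.1 ht1, ?_, ?_⟩
    · rw [hμ1.measure_Icc]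
      congr 1
      linarith
    · rw [hμ2.measure_Icc]
      congr 1
      linarith
  · -- The arc passes through the point `0 = 1` of the circle.
    have hts : t - 1 ≤ s := by linarith [ht.2]
    rw [hμ1.cdf_one ht1] at hF
    rw [hμ2.cdf_one ht1] at hG
    refine ⟨Set.Icc 0 (t - 1) ∪ Set.Icc s 1,
      achievable_union (by linarith) hts hs.2, ?_, ?_⟩
    · rw [hμ1.measure_union hts]
      congr 1
      linarith
    · rw [hμ2.measure_union hts]
      congr 1
      linarith
end
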